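/- Let X and Y be finite nonempty sets, p : X → ℝ a prior with p(x) ≥ 0 for all x and Σ_{x∈X} p(x) = 1, q : X → Y → ℝ a channel (nonnegative rows summing to 1), d : X × X → ℝ nonnegative and symmetric, and ε > 0. If q satisfies ε-metric differential privacy, i.e., q(x,y) ≤ exp(ε·d(x,x'))·q(x',y) for all x, x' ∈ X and all y ∈ Y, then for all x, x' with p(x) > 0 and p(x') > 0 and every y ∈ Y with q(x,y) > 0 and q(x',y) > 0, the posterior leakage is bounded: |ln(Pr[X=x|Y=y]/Pr[X=x'|Y=y]) − ln(p(x)/p(x'))| ≤ ε·d(x,x'), where Pr[X=x|Y=y] := p(x)·q(x,y)/Σ_{t∈X} p(t)·q(t,y). (Meeting ε-mDP is sufficient to achieve the posterior-leakage bound PL((x,x');Q) ≤ ε·d(x,x').) -/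

import Mathlib

/-!
By Bayes' rule the posterior odds of `x` against `x'` are the prior odds times the likelihood ratio
`q x y / q x' y`: the normalising constant cancels. The posterior leakage is therefore
`|log (q x y / q x' y)|`, which does not depend on the prior, and metric privacy, applied to
`(x, x')` and to `(x', x)`, bounds it from both sides.
-/

section

open Real

variable {X Y : Type*} {p : X → ℝ} {q : X → Y → ℝ} {d : X × X → ℝ} {ε : ℝ} {x x' : X} {y : Y}

/-- The total probability `Pr[Y = y]` of the output `y` under the prior `p` and the channel `q`.
It is a `tsum`, so `X` may be infinite; it is the junk value `0` when the series diverges. -/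
noncomputable def evidence (p : X → ℝ) (q : X → Y → ℝ) (y : Y) : ℝ :=
  ∑' t, p t * q t y

/-- The posterior `Pr[X = x | Y = y]` given by Bayes' rule, with junk value `0` when
`evidence p q y = 0`. -/
noncomputable def posterior (p : X → ℝ) (q : X → Y → ℝ) (y : Y) (x : X) : ℝ :=
  p x * q x y / evidence p q y

/-- The posterior leakage of the pair `(x, x')` at the output `y`: how far observing `y` moves the
log-odds of `x` against `x'`. -/
noncomputable def posteriorLeakage (p : X → ℝ) (q : X → Y → ℝ) (x x' : X) (y : Y) : ℝ :=
  |log (posterior p q y x / posterior p q y x') - log (p x / p x')|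

/-- `ε`-metric differential privacy of the channel `q` with respect to `d`. Neither the metric
axioms for `d` nor the normalisation of `q` are built in, so `q` may be a family of densities. -/
def IsMetricDP (q : X → Y → ℝ) (d : X × X → ℝ) (ε : ℝ) : Prop :=
  ∀ x x' y, q x y ≤ exp (ε * d (x, x')) * q x' y

theorem abs_log_div_le_iff {a b c : ℝ} (ha : 0 < a) (hb : 0 < b) :
    |log (a / b)| ≤ c ↔ a ≤ exp c * b ∧ b ≤ exp c * a := by
  have log_div_le_iff {u v : ℝ} (hu : 0 < u) (hv : 0 < v) : log (u / v) ≤ c ↔ u ≤ exp c * v := by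
    rw [log_le_iff_le_exp (div_pos hu hv), div_le_iff₀ hv]
  rw [abs_le', ← log_inv, inv_div, log_div_le_iff ha hb, log_div_le_iff hb ha]

theorem evidence_pos (hp : ∀ t, 0 ≤ p t) (hq : ∀ t, 0 ≤ q t y)
    (hsum : Summable fun t ↦ p t * q t y) (hpx : 0 < p x) (hqx : 0 < q x y) :
    0 < evidence p q y :=
  hsum.tsum_pos (fun t ↦ mul_nonneg (hp t) (hq t)) x (mul_pos hpx hqx)

theorem posterior_div_posterior (hy : evidence p q y ≠ 0) :
    posterior p q y x / posterior p q y x' = p x / p x' * (q x y / q x' y) := by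
  rw [posterior, posterior, div_div_div_cancel_right₀ hy, mul_div_mul_comm]

theorem posteriorLeakage_eq_abs_log_div (hy : evidence p q y ≠ 0) (hpx : p x ≠ 0) (hpx' : p x' ≠ 0)
    (hqx : q x y ≠ 0) (hqx' : q x' y ≠ 0) :
    posteriorLeakage p q x x' y = |log (q x y / q x' y)| := by
  rw [posteriorLeakage, posterior_div_posterior hy,
    log_mul (div_ne_zero hpx hpx') (div_ne_zero hqx hqx'), add_sub_cancel_left]

theorem IsMetricDP.abs_log_div_le (h : IsMetricDP q d ε) (hd : d (x, x') = d (x', x))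
    (hqx : 0 < q x y) (hqx' : 0 < q x' y) : |log (q x y / q x' y)| ≤ ε * d (x, x') :=
  (abs_log_div_le_iff hqx hqx').2 ⟨h x x' y, hd ▸ h x' x y⟩

theorem mdp_implies_posterior_leakage_bound_general (hp : ∀ t, 0 ≤ p t) (hq : ∀ t, 0 ≤ q t y)
    (hsum : Summable fun t ↦ p t * q t y) (hmdp : IsMetricDP q d ε) (hd : d (x, x') = d (x', x))
    (hpx : 0 < p x) (hpx' : 0 < p x') (hqx : 0 < q x y) (hqx' : 0 < q x' y) :
    posteriorLeakage p q x x' y ≤ ε * d (x, x') := by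
  have hy : evidence p q y ≠ 0 := (evidence_pos hp hq hsum hpx hqx).ne'
  rw [posteriorLeakage_eq_abs_log_div hy hpx.ne' hpx'.ne' hqx.ne' hqx'.ne']
  exact hmdp.abs_log_div_le hd hqx hqx'

end

/-- Meeting ε-metric differential privacy is sufficient to achieve the
posterior-leakage bound `PL((x,x');Q) ≤ ε·d(x,x')`. -/
theorem mdp_implies_posterior_leakage_bound
    (X Y : Type*) [Fintype X] [Fintype Y] [Nonempty X] [Nonempty Y]
    (p : X → ℝ) (hp : ∀ x, 0 ≤ p x) (hpsum : ∑ x, p x = 1)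
    (q : X → Y → ℝ) (hq : ∀ x y, 0 ≤ q x y) (hqsum : ∀ x, ∑ y, q x y = 1)
    (d : X × X → ℝ) (hd : ∀ x x', 0 ≤ d (x, x'))
    (hdsymm : ∀ x x', d (x, x') = d (x', x))
    (ε : ℝ) (hε : 0 < ε)
    (hmdp : ∀ x x' y, q x y ≤ Real.exp (ε * d (x, x')) * q x' y) :
    ∀ x x', 0 < p x → 0 < p x' → ∀ y, 0 < q x y → 0 < q x' y →
      |Real.log ((p x * q x y / ∑ t, p t * q t y) /
          (p x' * q x' y / ∑ t, p t * q t y)) -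
        Real.log (p x / p x')| ≤ ε * d (x, x') := by
  intro x x' hpx hpx' y hqx hqx'
  simpa only [posteriorLeakage, posterior, evidence, tsum_fintype] using
    mdp_implies_posterior_leakage_bound_general hp (hq · y) (hasSum_fintype _).summable hmdp
      (hdsymm x x') hpx hpx' hqx hqx'
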